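/- Let A, B be m×n real matrices all of whose entries lie in [0,1], and let M' be an SDP2-feasible solution for the game (A,B) whose upper-left (m+n)×(m+n) block M has rank 2. Then the pair (x,y) from the last column of M' satisfies ε(x,y) ≤ 1/2, i.e., (x,y) is a 1/2-Nash equilibrium. -/

import Mathlib

open Matrix BigOperators

/-- Index type for the `(m+n+1)×(m+n+1)` SDP matrix: `m` row-player strategies,
`n` column-player strategies, plus one extra index for the last row/column. -/
abbrev SDPIdx (m n : ℕ) := (Fin m ⊕ Fin n) ⊕ Unit

variable {m n : ℕ}

/-- The vector `x` appearing in the last column of the SDP matrix. -/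
def lastX (M : Matrix (SDPIdx m n) (SDPIdx m n) ℝ) (i : Fin m) : ℝ :=
  M (Sum.inl (Sum.inl i)) (Sum.inr ())

/-- The vector `y` appearing in the last column of the SDP matrix. -/
def lastY (M : Matrix (SDPIdx m n) (SDPIdx m n) ℝ) (j : Fin n) : ℝ :=
  M (Sum.inl (Sum.inr j)) (Sum.inr ())

/-- The `m × m` block `X`. -/
def blkX (M : Matrix (SDPIdx m n) (SDPIdx m n) ℝ) (i i' : Fin m) : ℝ :=
  M (Sum.inl (Sum.inl i)) (Sum.inl (Sum.inl i'))

/-- The `n × n` block `Y`. -/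
def blkY (M : Matrix (SDPIdx m n) (SDPIdx m n) ℝ) (j j' : Fin n) : ℝ :=
  M (Sum.inl (Sum.inr j)) (Sum.inl (Sum.inr j'))

/-- The `m × n` block `P = Zᵀ`. -/
def blkP (M : Matrix (SDPIdx m n) (SDPIdx m n) ℝ) (i : Fin m) (j : Fin n) : ℝ :=
  M (Sum.inl (Sum.inl i)) (Sum.inl (Sum.inr j))

/-- The `n × m` block `Z`. -/
def blkZ (M : Matrix (SDPIdx m n) (SDPIdx m n) ℝ) (j : Fin n) (i : Fin m) : ℝ :=
  M (Sum.inl (Sum.inr j)) (Sum.inl (Sum.inl i))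

/-- The upper-left `(m+n)×(m+n)` block `M = [[X, P],[Z, Y]]` of the SDP matrix. -/
def upperBlock (M : Matrix (SDPIdx m n) (SDPIdx m n) ℝ) :
    Matrix (Fin m ⊕ Fin n) (Fin m ⊕ Fin n) ℝ :=
  Matrix.of fun a b => M (Sum.inl a) (Sum.inl b)

/-- Membership in the standard simplex `Δ_k`. -/
def InSimplex {k : ℕ} (x : Fin k → ℝ) : Prop :=
  (∀ i, 0 ≤ x i) ∧ ∑ i, x i = 1

/-- `(x,y)` is a Nash equilibrium of the bimatrix game `(A,B)`:
`x ∈ Δ_m`, `y ∈ Δ_n`, `xᵀAy ≥ (Ay)_i` for all `i`, and `xᵀBy ≥ (Bᵀx)_j` for all `j`. -/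
def IsNash (A B : Matrix (Fin m) (Fin n) ℝ) (x : Fin m → ℝ) (y : Fin n → ℝ) : Prop :=
  InSimplex x ∧ InSimplex y ∧
  (∀ i : Fin m, ∑ i', ∑ j, x i' * A i' j * y j ≥ ∑ j, A i j * y j) ∧
  (∀ j : Fin n, ∑ i, ∑ j', x i * B i j' * y j' ≥ ∑ i, B i j * x i)

/-- Feasibility for SDP1: `M'` is psd, entrywise nonnegative, has `1` in the corner,
`x` and `y` sum to one, and the relaxed Nash constraints
`Tr(AZ) ≥ (Ay)_i` and `Tr(BZ) ≥ (Bᵀx)_j` hold. -/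
def SDP1Feasible (A B : Matrix (Fin m) (Fin n) ℝ)
    (M : Matrix (SDPIdx m n) (SDPIdx m n) ℝ) : Prop :=
  M.PosSemidef ∧
  (∀ a b, 0 ≤ M a b) ∧
  M (Sum.inr ()) (Sum.inr ()) = 1 ∧
  (∑ i, lastX M i) = 1 ∧
  (∑ j, lastY M j) = 1 ∧
  (∀ i : Fin m, ∑ i', ∑ j, A i' j * blkZ M j i' ≥ ∑ j, A i j * lastY M j) ∧
  (∀ j : Fin n, ∑ i, ∑ j', B i j' * blkZ M j' i ≥ ∑ i, B i j * lastX M i)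

/-- Feasibility for SDP2: SDP1 feasibility together with the row constraints and the
correlated equilibrium constraints. -/
def SDP2Feasible (A B : Matrix (Fin m) (Fin n) ℝ)
    (M : Matrix (SDPIdx m n) (SDPIdx m n) ℝ) : Prop :=
  SDP1Feasible A B M ∧
  (∀ i : Fin m, ∑ j, blkX M i j = lastX M i) ∧
  (∀ i : Fin m, ∑ j, blkP M i j = lastX M i) ∧
  (∀ j : Fin n, ∑ j', blkY M j j' = lastY M j) ∧
  (∀ j : Fin n, ∑ i, blkZ M j i = lastY M j) ∧
  (∀ i k : Fin m, ∑ j, A i j * blkP M i j ≥ ∑ j, A k j * blkP M i j) ∧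
  (∀ j k : Fin n, ∑ i, B i j * blkP M i j ≥ ∑ i, B i k * blkP M i j)

/-- `ε_A(x,y) = max_i (Ay)_i − xᵀAy`. -/
noncomputable def epsA (A : Matrix (Fin m) (Fin n) ℝ) (x : Fin m → ℝ) (y : Fin n → ℝ) : ℝ :=
  (⨆ i : Fin m, ∑ j, A i j * y j) - ∑ i, ∑ j, x i * A i j * y j

/-- `ε_B(x,y) = max_j (Bᵀx)_j − xᵀBy`. -/
noncomputable def epsB (B : Matrix (Fin m) (Fin n) ℝ) (x : Fin m → ℝ) (y : Fin n → ℝ) : ℝ :=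
  (⨆ j : Fin n, ∑ i, B i j * x i) - ∑ i, ∑ j, x i * B i j * y j

/-- `ε(x,y) = max{ε_A(x,y), ε_B(x,y)}`. -/
noncomputable def epsNE (A B : Matrix (Fin m) (Fin n) ℝ) (x : Fin m → ℝ) (y : Fin n → ℝ) : ℝ :=
  max (epsA A x y) (epsB B x y)

/-- The `m × n` all-ones matrix `J`. -/
def allOnesM (m n : ℕ) : Matrix (Fin m) (Fin n) ℝ :=
  Matrix.of fun _ _ => (1 : ℝ)

/-!
Put `v = (x, y)` and `e = (1, …, 1, 0, …, 0)`. The row constraints say `M e = v` with `e ⬝ v = 1`,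
so subtracting `v vᵀ` from `M` lowers the rank, and `M - v vᵀ` is positive semidefinite because it
is the Schur complement of the corner entry of `M'`. Rank two therefore forces `M - v vᵀ = w wᵀ`
with `w = (p, q)`, and the row constraints make `p` and `q` sum to zero.

Pairing the nonnegative entries `x i * x k + p i * p k` of `X` with the weights
`1 - sign (p i) * sign (p k)` gives `‖p‖₁ ≤ 1`, and likewise `‖q‖₁ ≤ 1`. Hence for `C = A, B`, with
entries in `[0, 1]`, `Tr (C Z) - xᵀ C y = pᵀ C q ≤ ‖p‖₁ ‖q‖₁ / 2 ≤ 1 / 2`, while `Tr (A Z)` and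
`Tr (B Z)` dominate every best-response payoff.
-/

section RankReduction

variable {ι κ K : Type*} [Fintype ι] [Fintype κ] [Field K]

/- Wedderburn's rank reduction: the new range lies in that of `G` and in the kernel of `f`, which
omits `G *ᵥ e`. -/
theorem rank_sub_vecMulVec_lt {G : Matrix ι κ K} {f : ι → K} {e : κ → K}
    (h : f ⬝ᵥ G *ᵥ e = 1) : (G - vecMulVec (G *ᵥ e) (f ᵥ* G)).rank < G.rank := by
  set N := G - vecMulVec (G *ᵥ e) (f ᵥ* G)
  have mulVec_eq (u : κ → K) : N *ᵥ u = G *ᵥ (u - (f ⬝ᵥ G *ᵥ u) • e) := by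
    rw [sub_mulVec, vecMulVec_mulVec, op_smul_eq_smul, ← dotProduct_mulVec, mulVec_sub, mulVec_smul]
  have dotProduct_eq_zero (u : κ → K) : f ⬝ᵥ N *ᵥ u = 0 := by
    rw [mulVec_eq, mulVec_sub, mulVec_smul, dotProduct_sub, dotProduct_smul, h, smul_eq_mul,
      mul_one, sub_self]
  refine Submodule.finrank_lt_finrank_of_lt (lt_of_le_of_ne ?_ fun heq => ?_)
  · rintro _ ⟨u, rfl⟩
    exact ⟨_, (mulVec_eq u).symm⟩
  · obtain ⟨u, hu⟩ : G *ᵥ e ∈ LinearMap.range N.mulVecLin := heq ▸ ⟨e, rfl⟩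
    rw [mulVecLin_apply] at hu
    exact one_ne_zero (h.symm.trans (hu ▸ dotProduct_eq_zero u))

theorem eq_vecMulVec_of_rank_le_one {G : Matrix ι κ K} (hG : G.rank ≤ 1) {f : ι → K} {e : κ → K}
    (h : f ⬝ᵥ G *ᵥ e = 1) : G = vecMulVec (G *ᵥ e) (f ᵥ* G) := by
  have hrank : (G - vecMulVec (G *ᵥ e) (f ᵥ* G)).rank = 0 :=
    Nat.lt_one_iff.1 ((rank_sub_vecMulVec_lt h).trans_le hG)
  rw [Matrix.rank, Submodule.finrank_eq_zero, LinearMap.range_eq_bot] at hrank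
  exact sub_eq_zero.1 (mulVec_injective (funext fun u => by
    simpa only [mulVecLin_apply, LinearMap.zero_apply, zero_mulVec] using congr($hrank u)))

end RankReduction

section PosSemidef

open scoped ComplexOrder

variable {ι 𝕜 : Type*} [RCLike 𝕜]

theorem posSemidef_toBlocks₁₁_sub_vecMulVec [Finite ι] {M : Matrix (ι ⊕ Unit) (ι ⊕ Unit) 𝕜}
    (hM : M.PosSemidef) (hcorner : M (.inr ()) (.inr ()) = 1) :
    (M.toBlocks₁₁ - vecMulVec (fun a => M (.inl a) (.inr ()))
      (star fun a => M (.inl a) (.inr ()))).PosSemidef := by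
  have hblocks : M = fromBlocks M.toBlocks₁₁ M.toBlocks₁₂ M.toBlocks₁₂ᴴ 1 := by
    ext (a | _) (b | _)
    · rfl
    · rfl
    · exact (hM.isHermitian.apply _ _).symm
    · simpa using hcorner
  have : Invertible (1 : Matrix Unit Unit 𝕜) := invertibleOne
  have hschur : M.toBlocks₁₂ * (1 : Matrix Unit Unit 𝕜)⁻¹ * M.toBlocks₁₂ᴴ =
      vecMulVec (fun a => M (.inl a) (.inr ())) (star fun a => M (.inl a) (.inr ())) := by
    ext a b
    simp [vecMulVec_apply, mul_apply, toBlocks₁₂]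
  rwa [hblocks, PosDef.fromBlocks₂₂ _ _ PosDef.one, hschur] at hM

variable [Fintype ι]

theorem exists_eq_vecMulVec_self_star_of_rank_le_one {N : Matrix ι ι 𝕜} (hN : N.PosSemidef)
    (hrank : N.rank ≤ 1) : ∃ w, N = vecMulVec w (star w) := by
  classical
  obtain rfl | hne := eq_or_ne N 0
  · exact ⟨0, by simp⟩
  obtain ⟨a, ha⟩ : ∃ a, N a a ≠ 0 := by
    by_contra! hdiag
    exact hne (hN.trace_eq_zero_iff.1 (Finset.sum_eq_zero fun a _ => hdiag a))
  obtain ⟨r, hr, hra⟩ : ∃ r : ℝ, 0 < r ∧ N a a = r :=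
    ⟨_, (RCLike.pos_iff.1 (hN.diag_nonneg.lt_of_ne' ha)).1,
      (hN.isHermitian.coe_re_apply_self a).symm⟩
  set e : ι → 𝕜 := Pi.single a ((√r)⁻¹ : ℝ)
  have normalized : star e ⬝ᵥ N *ᵥ e = 1 := by
    have hsq : (√r)⁻¹ * (r * (√r)⁻¹) = 1 := by
      field_simp
      exact (Real.sq_sqrt hr.le).symm
    have hsq' : (((√r)⁻¹ : ℝ) : 𝕜) * ((r : 𝕜) * ((√r)⁻¹ : ℝ)) = 1 := mod_cast hsq
    simpa [e, hra, mul_assoc] using hsq'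
  refine ⟨N *ᵥ e, (eq_vecMulVec_of_rank_le_one hrank normalized).trans ?_⟩
  rw [star_mulVec, hN.isHermitian.eq]

theorem exists_toBlocks₁₁_eq_of_rank_le_two {M : Matrix (ι ⊕ Unit) (ι ⊕ Unit) 𝕜} {v e : ι → 𝕜}
    (hM : M.PosSemidef) (hcorner : M (.inr ()) (.inr ()) = 1)
    (hv : ∀ a, M (.inl a) (.inr ()) = v a) (hrank : M.toBlocks₁₁.rank ≤ 2)
    (he : M.toBlocks₁₁ *ᵥ e = v) (hev : star e ⬝ᵥ v = 1) :
    ∃ w, M.toBlocks₁₁ = vecMulVec v (star v) + vecMulVec w (star w) := by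
  obtain rfl := funext hv
  have vecMul_eq : star e ᵥ* M.toBlocks₁₁ = star fun a => M (.inl a) (.inr ()) := by
    have hherm : M.toBlocks₁₁.IsHermitian := (hM.submatrix Sum.inl).isHermitian
    rw [← he, star_mulVec, hherm.eq]
  have rank_lt := rank_sub_vecMulVec_lt (he.symm ▸ hev)
  rw [he, vecMul_eq] at rank_lt
  obtain ⟨w, hw⟩ := exists_eq_vecMulVec_self_star_of_rank_le_one
    (posSemidef_toBlocks₁₁_sub_vecMulVec hM hcorner) (by lia)
  exact ⟨w, sub_eq_iff_eq_add'.1 hw⟩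

end PosSemidef

section Sums

theorem sum_sum_mul_add_mul {ι R : Type*} [Fintype ι] [CommSemiring R] (x p : ι → R) :
    ∑ i, ∑ k, (x i * x k + p i * p k) = (∑ i, x i) ^ 2 + (∑ i, p i) ^ 2 := by
  simp only [Finset.sum_add_distrib, sq, Finset.sum_mul_sum]

variable {ι κ R : Type*} [Fintype ι] [Fintype κ] [CommRing R] [LinearOrder R]
  [IsStrictOrderedRing R]

theorem sum_eq_zero_of_sum_mul_add_mul_eq {x p : ι → R} (hx : ∑ i, x i = 1)
    (h : ∀ i, ∑ k, (x i * x k + p i * p k) = x i) : ∑ i, p i = 0 := by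
  have htotal := sum_sum_mul_add_mul x p
  simp only [h, hx] at htotal
  simpa using htotal

theorem sq_sum_abs_le_of_mul_add_mul_nonneg {x p : ι → R} (h : ∀ i k, 0 ≤ x i * x k + p i * p k) :
    (∑ i, |p i|) ^ 2 ≤ (∑ i, x i) ^ 2 + (∑ i, p i) ^ 2 := by
  set σ : ι → R := fun i => SignType.sign (p i)
  have hσ (i) : |σ i| ≤ 1 := by
    obtain h | h | h := lt_trichotomy (p i) 0 <;> simp [σ, h]
  have hσp (i) : σ i * p i = |p i| := sign_mul_self (p i)
  have weighted : 0 ≤ ∑ i, ∑ k, (1 - σ i * σ k) * (x i * x k + p i * p k) :=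
    Finset.sum_nonneg fun i _ => Finset.sum_nonneg fun k _ => mul_nonneg
      (sub_nonneg.2 ((le_abs_self _).trans
        (abs_mul (σ i) (σ k) ▸ mul_le_one₀ (hσ i) (abs_nonneg _) (hσ k)))) (h i k)
  have expand : ∑ i, ∑ k, (1 - σ i * σ k) * (x i * x k + p i * p k) =
      (∑ i, x i) ^ 2 + (∑ i, p i) ^ 2 - ((∑ i, σ i * x i) ^ 2 + (∑ i, |p i|) ^ 2) := by
    simp only [← sum_sum_mul_add_mul, ← Finset.sum_sub_distrib, ← hσp]
    exact Finset.sum_congr rfl fun i _ => Finset.sum_congr rfl fun k _ => by ring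
  nlinarith [sq_nonneg (∑ i, σ i * x i)]

theorem sum_abs_le_one_of_mul_add_mul_nonneg {x p : ι → R} (hx : ∑ i, x i = 1) (hp : ∑ i, p i = 0)
    (h : ∀ i k, 0 ≤ x i * x k + p i * p k) : ∑ i, |p i| ≤ 1 :=
  (sq_le_one_iff₀ (by positivity)).1 (by simpa [hx, hp] using sq_sum_abs_le_of_mul_add_mul_nonneg h)

theorem two_mul_mul_le_abs_add {c : R} (hc : c ∈ Set.Icc 0 1) (t : R) :
    2 * (c * t) ≤ |t| + t := by
  have hneg : 0 ≤ c * (|t| - t) := mul_nonneg hc.1 (sub_nonneg.2 (le_abs_self t))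
  have hpos : 0 ≤ (1 - c) * (|t| + t) :=
    mul_nonneg (sub_nonneg.2 hc.2) (by linarith [neg_abs_le t])
  linarith

theorem two_mul_sum_mul_mul_le (C : Matrix ι κ R) (hC : ∀ i j, C i j ∈ Set.Icc 0 1)
    (p : ι → R) (q : κ → R) :
    2 * ∑ i, ∑ j, C i j * (p i * q j) ≤
      (∑ i, |p i|) * ∑ j, |q j| + (∑ i, p i) * ∑ j, q j := by
  simp only [Finset.mul_sum _ _ (2 : R), Finset.sum_mul_sum, ← Finset.sum_add_distrib, ← abs_mul]
  exact Finset.sum_le_sum fun i _ => Finset.sum_le_sum fun j _ =>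
    two_mul_mul_le_abs_add (hC i j) _

end Sums

theorem epsA_le [Nonempty (Fin m)] {A : Matrix (Fin m) (Fin n) ℝ} {x : Fin m → ℝ} {y : Fin n → ℝ}
    {ε : ℝ} (h : ∀ i, ∑ j, A i j * y j ≤ ∑ i, ∑ j, x i * A i j * y j + ε) : epsA A x y ≤ ε :=
  sub_le_iff_le_add'.2 (ciSup_le h)

theorem epsB_le [Nonempty (Fin n)] {B : Matrix (Fin m) (Fin n) ℝ} {x : Fin m → ℝ} {y : Fin n → ℝ}
    {ε : ℝ} (h : ∀ j, ∑ i, B i j * x i ≤ ∑ i, ∑ j, x i * B i j * y j + ε) : epsB B x y ≤ ε :=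
  sub_le_iff_le_add'.2 (ciSup_le h)

namespace SDP1Feasible

variable {A B : Matrix (Fin m) (Fin n) ℝ} {M : Matrix (SDPIdx m n) (SDPIdx m n) ℝ}

theorem exists_blk_eq_mul_add_mul (hfeas : SDP1Feasible A B M)
    (hX : ∀ i, ∑ k, blkX M i k = lastX M i) (hZ : ∀ j, ∑ i, blkZ M j i = lastY M j)
    (hrank : (upperBlock M).rank ≤ 2) :
    ∃ (p : Fin m → ℝ) (q : Fin n → ℝ),
      (∀ i k, blkX M i k = lastX M i * lastX M k + p i * p k) ∧
      (∀ j l, blkY M j l = lastY M j * lastY M l + q j * q l) ∧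
      ∀ j i, blkZ M j i = lastY M j * lastX M i + q j * p i := by
  obtain ⟨hpsd, -, hcorner, hx, -⟩ := hfeas
  have mulVec_eq : upperBlock M *ᵥ Sum.elim 1 0 = Sum.elim (lastX M) (lastY M) := by
    ext (i | j)
    · simpa [mulVec, dotProduct, upperBlock, blkX] using hX i
    · simpa [mulVec, dotProduct, upperBlock, blkZ] using hZ j
  obtain ⟨w, hw⟩ := exists_toBlocks₁₁_eq_of_rank_le_two hpsd hcorner (by rintro (i | j) <;> rfl)
    hrank mulVec_eq (by simpa [dotProduct] using hx)
  have entry (a b) := congr($hw a b)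
  exact ⟨fun i => w (.inl i), fun j => w (.inr j), fun i k => entry (.inl i) (.inl k),
    fun j l => entry (.inr j) (.inr l), fun j i => entry (.inr j) (.inl i)⟩

theorem sum_mul_blkZ_le (hfeas : SDP1Feasible A B M) (hX : ∀ i, ∑ k, blkX M i k = lastX M i)
    (hY : ∀ j, ∑ l, blkY M j l = lastY M j) (hZ : ∀ j, ∑ i, blkZ M j i = lastY M j)
    (hrank : (upperBlock M).rank ≤ 2) {C : Matrix (Fin m) (Fin n) ℝ}
    (hC : ∀ i j, C i j ∈ Set.Icc (0 : ℝ) 1) :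
    ∑ i, ∑ j, C i j * blkZ M j i ≤ ∑ i, ∑ j, lastX M i * C i j * lastY M j + 1 / 2 := by
  obtain ⟨p, q, hXp, hYq, hZpq⟩ := hfeas.exists_blk_eq_mul_add_mul hX hZ hrank
  obtain ⟨-, hnonneg, -, hx, hy, -⟩ := hfeas
  have sum_p : ∑ i, p i = 0 :=
    sum_eq_zero_of_sum_mul_add_mul_eq hx fun i => by simpa only [hXp] using hX i
  have sum_q : ∑ j, q j = 0 :=
    sum_eq_zero_of_sum_mul_add_mul_eq hy fun j => by simpa only [hYq] using hY j
  have norm_p : ∑ i, |p i| ≤ 1 :=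
    sum_abs_le_one_of_mul_add_mul_nonneg hx sum_p fun i k => hXp i k ▸ hnonneg (.inl _) (.inl _)
  have norm_q : ∑ j, |q j| ≤ 1 :=
    sum_abs_le_one_of_mul_add_mul_nonneg hy sum_q fun j l => hYq j l ▸ hnonneg (.inl _) (.inl _)
  have bilinear_le : ∑ i, ∑ j, C i j * (p i * q j) ≤ 1 / 2 := by
    have := two_mul_sum_mul_mul_le C hC p q
    rw [sum_p, zero_mul, add_zero] at this
    linarith [mul_le_one₀ norm_p (by positivity) norm_q]
  calc ∑ i, ∑ j, C i j * blkZ M j i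
      = ∑ i, ∑ j, lastX M i * C i j * lastY M j + ∑ i, ∑ j, C i j * (p i * q j) := by
        simp only [← Finset.sum_add_distrib, hZpq]
        exact Finset.sum_congr rfl fun i _ => Finset.sum_congr rfl fun j _ => by ring
    _ ≤ _ := by gcongr

end SDP1Feasible

theorem stmt14_general {A B : Matrix (Fin m) (Fin n) ℝ}
    (hA : ∀ i j, A i j ∈ Set.Icc (0 : ℝ) 1) (hB : ∀ i j, B i j ∈ Set.Icc (0 : ℝ) 1)
    {M : Matrix (SDPIdx m n) (SDPIdx m n) ℝ} (hfeas : SDP1Feasible A B M)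
    (hX : ∀ i, ∑ k, blkX M i k = lastX M i) (hY : ∀ j, ∑ l, blkY M j l = lastY M j)
    (hZ : ∀ j, ∑ i, blkZ M j i = lastY M j) (hrank : (upperBlock M).rank ≤ 2) :
    epsNE A B (lastX M) (lastY M) ≤ 1 / 2 := by
  have trace_le {C : Matrix (Fin m) (Fin n) ℝ} := hfeas.sum_mul_blkZ_le hX hY hZ hrank (C := C)
  obtain ⟨-, -, -, hx, hy, hNashA, hNashB⟩ := hfeas
  have : Nonempty (Fin m) := (Finset.nonempty_of_sum_ne_zero (hx ▸ one_ne_zero)).to_type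
  have : Nonempty (Fin n) := (Finset.nonempty_of_sum_ne_zero (hy ▸ one_ne_zero)).to_type
  exact max_le (epsA_le fun i => (hNashA i).trans (trace_le hA))
    (epsB_le fun j => (hNashB j).trans (trace_le hB))

/-- a rank-2 SDP2-feasible solution yields a `1/2`-Nash equilibrium in its
last column. -/
theorem stmt14 (hm : 0 < m) (hn : 0 < n) (A B : Matrix (Fin m) (Fin n) ℝ)
    (hA : ∀ i j, A i j ∈ Set.Icc (0 : ℝ) 1) (hB : ∀ i j, B i j ∈ Set.Icc (0 : ℝ) 1)
    (M : Matrix (SDPIdx m n) (SDPIdx m n) ℝ)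
    (hfeas : SDP2Feasible A B M)
    (hrank : (upperBlock M).rank = 2) :
    epsNE A B (lastX M) (lastY M) ≤ 1 / 2 := by
  obtain ⟨hfeas₁, hX, -, hY, hZ, -, -⟩ := hfeas
  exact stmt14_general hA hB hfeas₁ hX hY hZ hrank.le
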